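/- A Boolean inverse semigroup is simple (has no additive congruences other than equality and the universal congruence) if and only if it is 0-simplifying and fundamental. -/

import Mathlib

namespace Paper

/-- An inverse semigroup with zero: an associative multiplication, a zero that is
absorbing, and a map `⁻¹` sending each element to its unique generalized inverse. -/
class IsInverseSemigroup (S : Type*) [Mul S] [Zero S] [Inv S] : Prop where
  mul_assoc : ∀ a b c : S, a * b * c = a * (b * c)
  mul_inv_mul : ∀ a : S, a * a⁻¹ * a = a
  inv_mul_inv : ∀ a : S, a⁻¹ * a * a⁻¹ = a⁻¹
  inv_unique : ∀ a b : S, a * b * a = a → b * a * b = b → b = a⁻¹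
  zero_mul : ∀ a : S, 0 * a = 0
  mul_zero : ∀ a : S, a * 0 = 0

variable {S : Type*} [Mul S] [Zero S] [Inv S]

/-- The natural partial order: `a ≤ b` iff `a = b * a⁻¹ * a`. -/
def nle (a b : S) : Prop := a = b * a⁻¹ * a

/-- `e` is an idempotent. -/
def idem (e : S) : Prop := e * e = e

/-- `a` and `b` are compatible. -/
def compat (a b : S) : Prop := idem (a⁻¹ * b) ∧ idem (a * b⁻¹)

/-- `a` and `b` are orthogonal. -/
def orth (a b : S) : Prop := a⁻¹ * b = 0 ∧ a * b⁻¹ = 0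

/-- `j` is the least upper bound of `a` and `b` for the natural partial order. -/
def isJoin (a b j : S) : Prop :=
  nle a j ∧ nle b j ∧ ∀ c : S, nle a c → nle b c → nle j c

/-- `m` is the greatest lower bound of `a` and `b` for the natural partial order. -/
def isMeet (a b m : S) : Prop :=
  nle m a ∧ nle m b ∧ ∀ c : S, nle c a → nle c b → nle c m

/-- `a` is an atom: a nonzero element with nothing strictly between it and `0`. -/
def isAtomElem (a : S) : Prop := a ≠ 0 ∧ ∀ x : S, nle x a → x = a ∨ x = 0

/-- `s` is the least upper bound of the finite family `f`. -/
def isJoinFin {m : ℕ} (f : Fin m → S) (s : S) : Prop :=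
  (∀ i, nle (f i) s) ∧ ∀ c : S, (∀ i, nle (f i) c) → nle s c

/-- A Boolean inverse semigroup: a nonzero inverse semigroup with zero in which
compatible pairs have joins, multiplication distributes over binary compatible joins,
and the idempotents form a generalized Boolean algebra under the natural partial
order (meets of idempotents are automatically given by multiplication; the extra
requirement is the existence of relative complements). -/
class IsBooleanInverseSemigroup (S : Type*) [Mul S] [Zero S] [Inv S]
    extends IsInverseSemigroup S : Prop where
  exists_ne_zero : ∃ a : S, a ≠ 0
  compat_join : ∀ a b : S, compat a b → ∃ j, isJoin a b j
  mul_join : ∀ a b j c : S, isJoin a b j → isJoin (c * a) (c * b) (c * j)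
  join_mul : ∀ a b j c : S, isJoin a b j → isJoin (a * c) (b * c) (j * c)
  relcomp : ∀ e f : S, idem e → idem f → nle f e →
    ∃ g : S, idem g ∧ nle g e ∧ g * f = 0 ∧ isJoin f g e


/-- An additive ideal: a nonempty two-sided semigroup ideal closed under binary
compatible joins. -/
def isAdditiveIdeal {S : Type*} [Mul S] [Inv S] (I : Set S) : Prop :=
  I.Nonempty ∧ (∀ a ∈ I, ∀ s : S, s * a ∈ I ∧ a * s ∈ I) ∧
    (∀ a ∈ I, ∀ b ∈ I, compat a b → ∀ j : S, isJoin a b j → j ∈ I)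

/-- `f ≼ e`: there is a pencil `x₁, …, xₘ` from `f` to `e`, i.e.
`f = ⋁ᵢ d(xᵢ)` and `r(xᵢ) ≤ e` for all `i`. -/
def pencilLe {S : Type*} [Mul S] [Inv S] (f e : S) : Prop :=
  ∃ (m : ℕ) (x : Fin (m + 1) → S),
    isJoinFin (fun i => (x i)⁻¹ * x i) f ∧ ∀ i, nle (x i * (x i)⁻¹) e

/-- `S` is `0`-simplifying: it is nonzero and its only additive ideals are `{0}`
and `S`. -/
def isZeroSimplifying (S : Type*) [Mul S] [Zero S] [Inv S] : Prop :=
  (∃ a : S, a ≠ 0) ∧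
    ∀ I : Set S, isAdditiveIdeal I → I = {(0 : S)} ∨ I = Set.univ

/-- `S` is fundamental: every element commuting with all idempotents is idempotent. -/
def isFundamental (S : Type*) [Mul S] : Prop :=
  ∀ a : S, (∀ e : S, idem e → a * e = e * a) → idem a

/-- A morphism (additive homomorphism) of Boolean inverse semigroups: a semigroup
homomorphism preserving `0` and binary compatible joins. -/
def isMorphism {S : Type*} {T : Type*} [Mul S] [Zero S] [Inv S]
    [Mul T] [Zero T] [Inv T] (θ : S → T) : Prop :=
  (∀ a b : S, θ (a * b) = θ a * θ b) ∧ θ 0 = 0 ∧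
    ∀ a b j : S, compat a b → isJoin a b j → isJoin (θ a) (θ b) (θ j)

universe u

/-- `σ` is an additive congruence: the quotient of `S` by `σ` is a Boolean inverse
semigroup with the quotient map a morphism; equivalently, `σ` is the kernel
congruence of some surjective morphism onto a Boolean inverse semigroup. -/
def isAdditiveCongruence {S : Type u} [Mul S] [Zero S] [Inv S]
    (σ : S → S → Prop) : Prop :=
  ∃ (T : Type u) (mT : Mul T) (zT : Zero T) (iT : Inv T),
    @IsBooleanInverseSemigroup T mT zT iT ∧
      ∃ θ : S → T, Function.Surjective θ ∧ (@isMorphism S T _ _ _ mT zT iT θ) ∧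
        ∀ a b : S, σ a b ↔ θ a = θ b

section Basic
variable {S : Type*} [Mul S] [Zero S] [Inv S] [IsInverseSemigroup S]

theorem ma (a b c : S) : a * b * c = a * (b * c) := IsInverseSemigroup.mul_assoc a b c
theorem mim (a : S) : a * (a⁻¹ * a) = a := by rw [← ma]; exact IsInverseSemigroup.mul_inv_mul a
theorem imi (a : S) : a⁻¹ * (a * a⁻¹) = a⁻¹ := by
  rw [← ma]; exact IsInverseSemigroup.inv_mul_inv a
theorem mimx (a x : S) : a * (a⁻¹ * (a * x)) = a * x := by
  rw [← ma, ← ma, ma a, mim]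
theorem imix (a x : S) : a⁻¹ * (a * (a⁻¹ * x)) = a⁻¹ * x := by
  rw [← ma, ← ma, ma a⁻¹, imi]
theorem zm (a : S) : 0 * a = 0 := IsInverseSemigroup.zero_mul a
theorem mz (a : S) : a * 0 = 0 := IsInverseSemigroup.mul_zero a
theorem iu {a b : S} (h1 : a * (b * a) = a) (h2 : b * (a * b) = b) : b = a⁻¹ :=
  IsInverseSemigroup.inv_unique a b (by rw [ma, h1]) (by rw [ma, h2])
theorem ii (a : S) : a⁻¹⁻¹ = a := (iu (imi a) (mim a)).symm
theorem idem_inv {e : S} (h : idem e) : e⁻¹ = e := by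
  unfold idem at h
  exact (iu (by rw [h, h]) (by rw [h, h])).symm
theorem idem_zero : idem (0 : S) := zm 0
theorem inv_zero' : (0 : S)⁻¹ = 0 := idem_inv idem_zero
theorem idx {e : S} (h : idem e) (x : S) : e * (e * x) = e * x := by
  rw [← ma, show e * e = e from h]

theorem idem_mul {e f : S} (he : idem e) (hf : idem f) : idem (e * f) := by
  have h1 : f * ((e * f)⁻¹ * e) = (e * f)⁻¹ := by
    apply iu
    · have := mim (e * f)
      simp only [ma] at this ⊢
      rw [idx hf, idx he, this]
    · have := imix (e * f) e
      simp only [ma] at this ⊢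
      rw [idx he, idx hf, this]
  have h2 : idem ((e * f)⁻¹) := by
    have h3 := imix (e * f) e
    unfold idem
    rw [← h1]
    simp only [ma] at h3 ⊢
    rw [h3]
  have h4 := idem_inv h2
  rw [ii] at h4
  rw [h4]; exact h2

theorem idem_comm {e f : S} (he : idem e) (hf : idem f) : e * f = f * e := by
  have h1 := idem_mul he hf
  have h2 := idem_mul hf he
  have h3 : f * e = (e * f)⁻¹ := by
    apply iu
    · unfold idem at h1
      simp only [ma] at h1 ⊢
      rw [idx hf, idx he, h1]
    · unfold idem at h2
      simp only [ma] at h2 ⊢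
      rw [idx he, idx hf, h2]
  rw [h3, idem_inv h1]

theorem idem_d (a : S) : idem (a⁻¹ * a) := by unfold idem; rw [ma, mim]
theorem idem_r (a : S) : idem (a * a⁻¹) := by unfold idem; rw [ma, imi]

theorem mul_inv' (a b : S) : (a * b)⁻¹ = b⁻¹ * a⁻¹ := by
  have h := idem_comm (idem_d a) (idem_r b)
  symm
  apply iu
  · calc a * b * (b⁻¹ * a⁻¹ * (a * b)) = a * ((b * b⁻¹) * (a⁻¹ * a)) * b := by simp only [ma]
      _ = a * b := by rw [← h]; simp only [ma, mimx, mim]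
  · calc b⁻¹ * a⁻¹ * (a * b * (b⁻¹ * a⁻¹)) = b⁻¹ * ((a⁻¹ * a) * (b * b⁻¹)) * a⁻¹ := by
          simp only [ma]
      _ = b⁻¹ * a⁻¹ := by rw [h]; simp only [ma, imix, imi]

theorem idem_conj (a : S) {e : S} (he : idem e) : idem (a⁻¹ * (e * a)) := by
  have h := idem_comm (idem_r a) he
  unfold idem
  calc a⁻¹ * (e * a) * (a⁻¹ * (e * a)) = a⁻¹ * (e * ((a * a⁻¹) * e)) * a := by simp only [ma]
    _ = _ := by rw [h]; simp only [ma, idx he, mim]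

theorem nle_mul_idem (a : S) {e : S} (he : idem e) : nle (a * e) a := by
  unfold nle
  rw [mul_inv', idem_inv he]
  have h := idem_comm he (idem_d a)
  calc a * e = a * (a⁻¹ * a) * (e * e) := by rw [mim, show e * e = e from he]
    _ = a * ((a⁻¹ * a) * e) * e := by simp only [ma]
    _ = _ := by rw [← h]; simp only [ma]

theorem nle_idem_mul (a : S) {e : S} (he : idem e) : nle (e * a) a := by
  have h := nle_mul_idem a (idem_conj a he)
  have h2 := idem_comm (idem_r a) he
  have : a * (a⁻¹ * (e * a)) = e * a := by
    calc _ = (a * a⁻¹) * e * a := by simp only [ma]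
      _ = _ := by rw [h2]; simp only [ma, mim]
  rwa [this] at h

theorem nle.r {a b : S} (h : nle a b) : b * (a⁻¹ * a) = a := by
  rw [← ma]; exact h.symm

theorem nle.l {a b : S} (h : nle a b) : a * (a⁻¹ * b) = a := by
  have h1 := idem_comm (idem_d a) (idem_d b)
  have h2 := h.r
  have h3 : a⁻¹ = (a⁻¹ * a) * b⁻¹ := by
    conv_lhs => rw [← h2, mul_inv', idem_inv (idem_d a)]
  calc a * (a⁻¹ * b) = a * (a⁻¹ * a * b⁻¹ * b) := by rw [← h3]
    _ = b * (a⁻¹ * a) * (a⁻¹ * a * b⁻¹ * b) :=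
        congrArg (· * (a⁻¹ * a * b⁻¹ * b)) h2.symm
    _ = b * ((a⁻¹ * a) * (b⁻¹ * b)) := by
        simp only [ma, imix, mimx]
    _ = b * (a⁻¹ * a) := by rw [h1]; simp only [ma, mimx]
    _ = a := h2

theorem nle_refl (a : S) : nle a a := by unfold nle; rw [ma, mim]

theorem nle_trans {a b c : S} (h1 : nle a b) (h2 : nle b c) : nle a c := by
  have h := nle_mul_idem c (idem_mul (idem_d b) (idem_d a))
  rwa [← ma, h2.r, h1.r] at h

theorem nle_antisymm {a b : S} (h1 : nle a b) (h2 : nle b a) : a = b := by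
  have h := idem_comm (idem_d a) (idem_d b)
  calc a = b * (b⁻¹ * b) * (a⁻¹ * a) := by rw [mim, h1.r]
    _ = b * ((a⁻¹ * a) * (b⁻¹ * b)) := by rw [h, ma]
    _ = b := by rw [← ma, h1.r, h2.r]

theorem nle_mul_left {a b : S} (c : S) (h : nle a b) : nle (c * a) (c * b) := by
  have h' := nle_mul_idem (c * b) (idem_d a)
  rwa [ma, h.r] at h'

theorem nle_mul_right {a b : S} (c : S) (h : nle a b) : nle (a * c) (b * c) := by
  have h' := nle_idem_mul (b * c) (idem_r a)
  have h2 : a * a⁻¹ * (b * c) = a * c := by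
    have := h.l
    rw [← ma, ma a, this]
  rwa [h2] at h'

theorem nle_inv {a b : S} (h : nle a b) : nle a⁻¹ b⁻¹ := by
  have h' := nle_idem_mul b⁻¹ (idem_d a)
  have h2 : a⁻¹ = (a⁻¹ * a) * b⁻¹ := by
    conv_lhs => rw [← h.r, mul_inv', idem_inv (idem_d a)]
  rwa [← h2] at h'

theorem zero_nle (a : S) : nle 0 a := by unfold nle; rw [mz]
theorem nle_zero {a : S} (h : nle a 0) : a = 0 := by
  unfold nle at h; rw [zm, zm] at h; exact h

theorem nle_d {a b : S} (h : nle a b) : b⁻¹ * a = a⁻¹ * a := by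
  have h1 := idem_comm (idem_d a) (idem_d b)
  have h2 : a * (b⁻¹ * b) = a := by
    conv_lhs => rw [← h.l]
    simp only [ma, mim]
    exact h.l
  calc b⁻¹ * a = (b⁻¹ * b) * (a⁻¹ * a) := by
        rw [ma, h.r]
    _ = a⁻¹ * a := by rw [← h1, ma, h2]

theorem compat_of_ub {a b j : S} (h1 : nle a j) (h2 : nle b j) : compat a b := by
  have key : ∀ {a b j : S}, nle a j → nle b j → idem (a⁻¹ * b) := by
    intro a b j h1 h2
    have : a⁻¹ * b = (a⁻¹ * a) * (b⁻¹ * b) := by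
      rw [← nle_d h2, ma, ← ma a]
      have := (nle_inv h1).r
      have h3 : a * j⁻¹ = a * a⁻¹ := by
        have := nle_d (nle_inv h1)
        rw [ii, ii] at this
        have h4 := congrArg (·⁻¹) this
        simpa only [mul_inv', ii] using h4
      rw [h3, ma, imix]
    rw [this]; exact idem_mul (idem_d a) (idem_d b)
  refine ⟨key h1 h2, ?_⟩
  have := key (nle_inv h1) (nle_inv h2)
  rwa [ii] at this

theorem join_compat {a b j : S} (h : isJoin a b j) : compat a b := compat_of_ub h.1 h.2.1

theorem join_unique {a b j k : S} (h : isJoin a b j) (h' : isJoin a b k) : j = k :=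
  nle_antisymm (h.2.2 _ h'.1 h'.2.1) (h'.2.2 _ h.1 h.2.1)

theorem join_symm {a b j : S} (h : isJoin a b j) : isJoin b a j :=
  ⟨h.2.1, h.1, fun c h1 h2 => h.2.2 c h2 h1⟩

theorem join_zero (a : S) : isJoin a 0 a := ⟨nle_refl a, zero_nle a, fun _ h _ => h⟩
theorem zero_join (a : S) : isJoin 0 a a := join_symm (join_zero a)

theorem nle_inv' {a b : S} (h : nle a⁻¹ b) : nle a b⁻¹ := by
  have := nle_inv h
  rwa [ii] at this

theorem inv_join {a b j : S} (h : isJoin a b j) : isJoin a⁻¹ b⁻¹ j⁻¹ :=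
  ⟨nle_inv h.1, nle_inv h.2.1, fun c h1 h2 => by
    have := nle_inv (h.2.2 _ (nle_inv' h1) (nle_inv' h2))
    rwa [ii] at this⟩

theorem join_four {a b j c d x y k w : S} (ha : isJoin c x a) (hb : isJoin d y b)
    (hj : isJoin a b j) (hk : isJoin c d k) (hw : isJoin x y w) : isJoin k w j :=
  ⟨hk.2.2 _ (nle_trans ha.1 hj.1) (nle_trans hb.1 hj.2.1),
   hw.2.2 _ (nle_trans ha.2.1 hj.1) (nle_trans hb.2.1 hj.2.1),
   fun _ h1 h2 => hj.2.2 _ (ha.2.2 _ (nle_trans hk.1 h1) (nle_trans hw.1 h2))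
    (hb.2.2 _ (nle_trans hk.2.1 h1) (nle_trans hw.2.1 h2))⟩

theorem join_three {m u c x a w : S} (h1 : isJoin m u c) (h2 : isJoin c x a)
    (h3 : isJoin u x w) : isJoin m w a :=
  ⟨nle_trans h1.1 h2.1, h3.2.2 _ (nle_trans h1.2.1 h2.1) h2.2.1,
   fun _ h4 h5 => h2.2.2 _ (h1.2.2 _ h4 (nle_trans h3.1 h5)) (nle_trans h3.2.1 h5)⟩

theorem nle_idem {e f : S} (hf : idem f) (h : nle f e) : e * f = f := by
  have := h.r
  rwa [idem_inv hf, show f * f = f from hf] at this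

theorem orth_compat {a b : S} (h1 : a⁻¹ * b = 0) (h2 : a * b⁻¹ = 0) : compat a b := by
  unfold compat
  rw [h1, h2]; exact ⟨idem_zero, idem_zero⟩

end Basic

section Bool
variable {S : Type*} [Mul S] [Zero S] [Inv S] [IsBooleanInverseSemigroup S]

theorem join_d {a b j : S} (h : isJoin a b j) : isJoin (a⁻¹ * a) (b⁻¹ * b) (j⁻¹ * j) := by
  have := IsBooleanInverseSemigroup.mul_join a b j j⁻¹ h
  rwa [nle_d h.1, nle_d h.2.1] at this

theorem nle_conj {a j : S} (h : nle a j) (e : S) (he : idem e) : a * e * j⁻¹ = a * e * a⁻¹ := by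
  have h2 : a⁻¹ = (a⁻¹ * a) * j⁻¹ := by
    conv_lhs => rw [← h.r, mul_inv', idem_inv (idem_d a)]
  have h3 := idem_comm he (idem_d a)
  conv_rhs => rw [h2]
  rw [← ma (a * e), ma a e (a⁻¹ * a), h3]
  simp only [ma, mimx]

theorem join_conj {a b j : S} (h : isJoin a b j) (e : S) (he : idem e) :
    isJoin (a * e * a⁻¹) (b * e * b⁻¹) (j * e * j⁻¹) := by
  have := IsBooleanInverseSemigroup.join_mul _ _ _ j⁻¹
    (IsBooleanInverseSemigroup.join_mul a b j e h)
  rwa [nle_conj h.1 e he, nle_conj h.2.1 e he] at this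

theorem exists_sub_join {a b j : S} (h1 : nle a j) (h2 : nle b j) : ∃ k, isJoin a b k :=
  IsBooleanInverseSemigroup.compat_join a b (compat_of_ub h1 h2)

theorem lift_lemma {T : Type*} [Mul T] [Zero T] [Inv T] [IsInverseSemigroup T] (θ : S → T)
    (hm : ∀ a b, θ (a * b) = θ a * θ b) (hz : θ 0 = 0) (hi : ∀ a, θ a⁻¹ = (θ a)⁻¹)
    (hj : ∀ a b j, isJoin a b j → isJoin (θ a) (θ b) (θ j)) (a b : S)
    (hc : compat (θ a) (θ b)) :
    ∃ c j, isJoin a c j ∧ nle (θ c) (θ b) ∧ isJoin (θ a) (θ b) (θ j) := by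
  obtain ⟨h, hh, hle, h0, hJ⟩ := IsBooleanInverseSemigroup.relcomp (b⁻¹ * b)
    (b⁻¹ * b * (a⁻¹ * a)) (idem_d b) (idem_mul (idem_d b) (idem_d a))
    (nle_mul_idem _ (idem_d a))
  obtain ⟨g, hg, gle, g0, gJ⟩ := IsBooleanInverseSemigroup.relcomp (b * b⁻¹)
    (b * b⁻¹ * (a * a⁻¹)) (idem_r b) (idem_mul (idem_r b) (idem_r a))
    (nle_mul_idem _ (idem_r a))
  have hle' := nle_idem hh hle
  have gle' := nle_idem hg gle
  have h1 : h * (a⁻¹ * a) = 0 := by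
    rw [← ma, idem_comm hh (idem_d b), hle'] at h0; exact h0
  have g1 : g * (a * a⁻¹) = 0 := by
    rw [← ma, idem_comm hg (idem_r b), gle'] at g0; exact g0
  have J1 := IsBooleanInverseSemigroup.mul_join _ _ _ b hJ
  have e1 : b * (b⁻¹ * b * (a⁻¹ * a)) = b * (a⁻¹ * a) := by simp only [ma, mimx]
  rw [e1, mim] at J1
  have J2 := IsBooleanInverseSemigroup.join_mul _ _ _ (b * h) gJ
  have e2 : b * b⁻¹ * (a * a⁻¹) * (b * h) = a * (a⁻¹ * (b * h)) := by
    rw [idem_comm (idem_r b) (idem_r a)]; simp only [ma, mimx]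
  have e3 : b * b⁻¹ * (b * h) = b * h := by simp only [ma, mimx]
  rw [e2, e3] at J2
  have z1 : θ (a⁻¹ * (b * h)) = 0 := by
    have hH : idem (θ h) := by unfold idem; rw [← hm, hh]
    rw [← ma, hm, hm, hi, idem_comm hc.1 hH, ← hi, ← hm, ← hm]
    have : h * (a⁻¹ * b) = h * (a⁻¹ * a) * (a⁻¹ * b) := by simp only [ma, imix]
    rw [this, h1, zm, hz]
  have e4 : θ (b * h) = θ (g * (b * h)) := by
    have := hj _ _ _ J2
    rw [hm a, z1, mz] at this
    exact join_unique this (zero_join _)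
  have J3 := hj _ _ _ J1
  rw [e4] at J3
  have o1 : a⁻¹ * (g * (b * h)) = 0 := by
    have : a⁻¹ * g = 0 := by
      rw [← imi a, ma, ← idem_comm hg (idem_r a), g1, mz]
    rw [← ma, this, zm]
  have o2 : a * (g * (b * h))⁻¹ = 0 := by
    have : a * h = 0 := by
      rw [← mim a, ma, ← idem_comm hh (idem_d a), h1, mz]
    rw [mul_inv', mul_inv', idem_inv hh, ma, ← ma, this, zm]
  obtain ⟨j, Hj⟩ := IsBooleanInverseSemigroup.compat_join _ _ (orth_compat o1 o2)
  refine ⟨_, j, Hj, J3.2.1, ?_⟩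
  have K := hj _ _ _ Hj
  have l1 : nle (θ (b * (a⁻¹ * a))) (θ a) := by
    have hc2 : idem (θ b * (θ a)⁻¹) := by
      have h3 := idem_inv hc.2
      rw [mul_inv', ii] at h3
      rw [h3]; exact hc.2
    rw [hm, hm, hi, ← ma]
    exact nle_idem_mul _ hc2
  exact ⟨K.1, J3.2.2 _ (nle_trans l1 K.1) K.2.1,
    fun c h1 h2 => K.2.2 _ h1 (nle_trans J3.2.1 h2)⟩

theorem boolean_of_surj {T : Type*} [Mul T] [Zero T] [Inv T] [IsInverseSemigroup T] (θ : S → T)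
    (hs : Function.Surjective θ)
    (hm : ∀ a b, θ (a * b) = θ a * θ b) (hz : θ 0 = 0) (hi : ∀ a, θ a⁻¹ = (θ a)⁻¹)
    (hj : ∀ a b j, isJoin a b j → isJoin (θ a) (θ b) (θ j)) (hn : ∃ t : T, t ≠ 0) :
    IsBooleanInverseSemigroup T := by
  have mj : ∀ a b j c : T, isJoin a b j → isJoin (c * a) (c * b) (c * j) := by
    intro α β γ κ h
    obtain ⟨a, rfl⟩ := hs α
    obtain ⟨b, rfl⟩ := hs β
    obtain ⟨c, rfl⟩ := hs κ
    obtain ⟨b2, j, H1, H2, H3⟩ := lift_lemma θ hm hz hi hj a b (join_compat h)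
    rw [join_unique h H3]
    have K := hj _ _ _ (IsBooleanInverseSemigroup.mul_join _ _ _ c H1)
    simp only [hm] at K
    exact ⟨K.1, nle_mul_left _ H3.2.1,
      fun d h1 h2 => K.2.2 _ h1 (nle_trans (nle_mul_left _ H2) h2)⟩
  have hid : ∀ ε : T, idem ε → ∃ e : S, idem e ∧ θ e = ε := by
    intro ε h
    obtain ⟨a, rfl⟩ := hs ε
    exact ⟨a⁻¹ * a, idem_d a, by rw [hm, hi, idem_inv h, h]⟩
  refine { exists_ne_zero := hn, compat_join := ?_, mul_join := mj, join_mul := ?_, relcomp := ?_ }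
  · intro α β h
    obtain ⟨a, rfl⟩ := hs α
    obtain ⟨b, rfl⟩ := hs β
    obtain ⟨b2, j, H1, H2, H3⟩ := lift_lemma θ hm hz hi hj a b h
    exact ⟨_, H3⟩
  · intro a b j c h
    have := inv_join (mj _ _ _ c⁻¹ (inv_join h))
    simpa only [mul_inv', ii] using this
  · intro ε φ hε hφ hle
    obtain ⟨e, he, rfl⟩ := hid _ hε
    obtain ⟨f, hf, rfl⟩ := hid _ hφ
    obtain ⟨g, G1, G2, G3, G4⟩ := IsBooleanInverseSemigroup.relcomp e (e * f) he
      (idem_mul he hf) (nle_mul_idem _ hf)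
    have hef : θ (e * f) = θ f := by rw [hm, nle_idem hφ hle]
    have K := hj _ _ _ G4
    refine ⟨θ g, by unfold idem; rw [← hm, G1], K.2.1, ?_, ?_⟩
    · rw [← hef, ← hm, G3, hz]
    · rwa [hef] at K

end Bool


theorem additive_of_rel {S : Type u} [Mul S] [Zero S] [Inv S] [IsBooleanInverseSemigroup S]
    (r : Setoid S) (hl : ∀ a b c, r a b → r (c * a) (c * b))
    (hr : ∀ a b c, r a b → r (a * c) (b * c))
    (hi : ∀ a b, r a b → r a⁻¹ b⁻¹)
    (hj : ∀ a b j a' b' j', isJoin a b j → isJoin a' b' j' → r a a' → r b b' → r j j')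
    (hn : ∃ a, ¬ r a 0) : isAdditiveCongruence (fun a b => r a b) := by
  let mT : Mul (Quotient r) := ⟨Quotient.map₂ (· * ·) (fun a a' h b b' h' =>
    r.trans (hr _ _ b h) (hl _ _ a' h'))⟩
  let zT : Zero (Quotient r) := ⟨Quotient.mk r 0⟩
  let iT : Inv (Quotient r) := ⟨Quotient.map (·⁻¹) (fun a b h => hi a b h)⟩
  have qm : ∀ a b : S, Quotient.mk r (a * b) = Quotient.mk r a * Quotient.mk r b :=
    fun _ _ => rfl
  have qi : ∀ a : S, Quotient.mk r a⁻¹ = (Quotient.mk r a)⁻¹ := fun _ => rfl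
  have qz : Quotient.mk r 0 = 0 := rfl
  have qs : Function.Surjective (Quotient.mk r) := Quotient.mk_surjective
  have ass : ∀ a b c : Quotient r, a * b * c = a * (b * c) := by
    intro a b c
    obtain ⟨a, rfl⟩ := qs a
    obtain ⟨b, rfl⟩ := qs b
    obtain ⟨c, rfl⟩ := qs c
    simp only [← qm, ma]
  have qid : ∀ ε : Quotient r, ε * ε = ε → ∃ e : S, idem e ∧ Quotient.mk r e = ε := by
    intro ε h
    obtain ⟨a, rfl⟩ := qs ε
    refine ⟨(a * a⁻¹) * (a⁻¹ * a), idem_mul (idem_r a) (idem_d a), ?_⟩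
    have h2 : Quotient.mk r (a⁻¹ * a⁻¹) = Quotient.mk r a⁻¹ := by
      rw [← mul_inv', qi, qm, h, ← qi]
    have h3 : a * a⁻¹ * (a⁻¹ * a) = a * (a⁻¹ * a⁻¹) * a := by simp only [ma]
    rw [h3, qm, qm, h2, ← qm, ← qm, ma, mim]
  have qc : ∀ ε φ : Quotient r, ε * ε = ε → φ * φ = φ → ε * φ = φ * ε := by
    intro ε φ h1 h2
    obtain ⟨e, he, rfl⟩ := qid _ h1
    obtain ⟨f, hf, rfl⟩ := qid _ h2
    rw [← qm, ← qm, idem_comm he hf]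
  have m1 : ∀ a : Quotient r, a * a⁻¹ * a = a := by
    intro a
    obtain ⟨a, rfl⟩ := qs a
    rw [← qi, ← qm, ← qm, ma, mim]
  have m2 : ∀ a : Quotient r, a⁻¹ * a * a⁻¹ = a⁻¹ := by
    intro a
    obtain ⟨a, rfl⟩ := qs a
    rw [← qi, ← qm, ← qm, ma, imi]
  have inst : IsInverseSemigroup (Quotient r) := by
    refine { mul_assoc := ass, mul_inv_mul := m1, inv_mul_inv := m2, inv_unique := ?_,
             zero_mul := ?_, mul_zero := ?_ }
    · intro a b h1 h2
      have i1 : a * b * (a * b) = a * b := by rw [← ass, h1]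
      have i2 : a * a⁻¹ * (a * a⁻¹) = a * a⁻¹ := by rw [← ass, m1]
      have i3 : b * a * (b * a) = b * a := by rw [← ass, h2]
      have i4 : a⁻¹ * a * (a⁻¹ * a) = a⁻¹ * a := by rw [← ass, m2]
      have c1 : a * b = a * a⁻¹ := by
        calc a * b = (a * a⁻¹) * (a * b) := by rw [← ass, m1]
          _ = (a * b) * (a * a⁻¹) := qc _ _ i2 i1
          _ = a * a⁻¹ := by rw [← ass, h1]
      have c2 : b * a = a⁻¹ * a := by
        calc b * a = b * (a * a⁻¹ * a) := by rw [m1]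
          _ = (b * a) * (a⁻¹ * a) := by simp only [ass]
          _ = (a⁻¹ * a) * (b * a) := qc _ _ i3 i4
          _ = a⁻¹ * (a * b * a) := by simp only [ass]
          _ = a⁻¹ * a := by rw [h1]
      calc b = b * a * b := h2.symm
        _ = a⁻¹ * (a * b) := by rw [c2, ass]
        _ = a⁻¹ := by rw [c1, ← ass, m2]
    · intro a
      obtain ⟨a, rfl⟩ := qs a
      rw [← qz, ← qm, zm]
    · intro a
      obtain ⟨a, rfl⟩ := qs a
      rw [← qz, ← qm, mz]
  have qn : ∀ a b : S, nle a b → nle (Quotient.mk r a) (Quotient.mk r b) := by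
    intro a b h
    unfold nle at h ⊢
    rw [← qi, ← qm, ← qm, ← h]
  have qj : ∀ a b j : S, isJoin a b j →
      isJoin (Quotient.mk r a) (Quotient.mk r b) (Quotient.mk r j) := by
    intro a b j h
    refine ⟨qn _ _ h.1, qn _ _ h.2.1, ?_⟩
    intro c h1 h2
    obtain ⟨c, rfl⟩ := qs c
    have K := IsBooleanInverseSemigroup.mul_join _ _ _ c (join_d h)
    simp only [← ma] at K
    unfold nle at h1 h2 ⊢
    rw [← qi, ← qm, ← qm] at h1 h2 ⊢
    exact Quotient.sound (hj _ _ _ _ _ _ h K (Quotient.exact h1) (Quotient.exact h2))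
  refine ⟨Quotient r, mT, zT, iT, ?_, Quotient.mk r, qs, ⟨qm, qz, fun a b j _ h => qj a b j h⟩,
    fun a b => ⟨fun h => Quotient.sound h, fun h => Quotient.exact h⟩⟩
  refine boolean_of_surj (Quotient.mk r) qs qm qz qi qj ?_
  obtain ⟨a, ha⟩ := hn
  exact ⟨Quotient.mk r a, fun h => ha (Quotient.exact h)⟩

section Cong
variable {S : Type u} [Mul S] [Zero S] [Inv S] [IsBooleanInverseSemigroup S]

theorem fund_of_simple
    (H : ∀ σ : S → S → Prop, isAdditiveCongruence σ →
        (∀ a b : S, σ a b ↔ a = b) ∨ (∀ a b : S, σ a b)) : isFundamental S := by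
  let r : Setoid S :=
    { r := fun a b => ∀ e : S, idem e → a * e * a⁻¹ = b * e * b⁻¹ ∧ a⁻¹ * e * a = b⁻¹ * e * b
      iseqv := ⟨fun _ _ _ => ⟨rfl, rfl⟩, fun h e he => ⟨(h e he).1.symm, (h e he).2.symm⟩,
        fun h h' e he => ⟨(h e he).1.trans (h' e he).1, (h e he).2.trans (h' e he).2⟩⟩ }
  have rdef : ∀ a b : S, r a b ↔ ∀ e : S, idem e →
      a * e * a⁻¹ = b * e * b⁻¹ ∧ a⁻¹ * e * a = b⁻¹ * e * b := fun _ _ => Iff.rfl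
  have hi : ∀ a b, r a b → r a⁻¹ b⁻¹ := by
    intro a b h e he
    simp only [ii]
    exact ⟨(h e he).2, (h e he).1⟩
  have hl : ∀ a b c, r a b → r (c * a) (c * b) := by
    intro a b c h e he
    have h1 := (h e he).1
    have h2 := (h _ (idem_conj c he)).2
    simp only [mul_inv', ma] at h1 h2 ⊢
    have h3 : a * (e * (a⁻¹ * c⁻¹)) = b * (e * (b⁻¹ * c⁻¹)) := by
      simpa only [ma] using congrArg (· * c⁻¹) h1
    exact ⟨by rw [h3], h2⟩
  have hr : ∀ a b c, r a b → r (a * c) (b * c) := by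
    intro a b c h
    have := hi _ _ (hl _ _ c⁻¹ (hi _ _ h))
    simpa only [mul_inv', ii] using this
  have hj : ∀ a b j a' b' j', isJoin a b j → isJoin a' b' j' → r a a' → r b b' → r j j' := by
    intro a b j a' b' j' h h' h1 h2 e he
    constructor
    · have K := join_conj h e he
      rw [(h1 e he).1, (h2 e he).1] at K
      exact join_unique K (join_conj h' e he)
    · have K := join_conj (inv_join h) e he
      have K' := join_conj (inv_join h') e he
      simp only [ii] at K K'
      rw [(h1 e he).2, (h2 e he).2] at K
      exact join_unique K K'
  have hn : ∃ a, ¬ r a 0 := by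
    obtain ⟨a, ha⟩ := IsBooleanInverseSemigroup.exists_ne_zero (S := S)
    refine ⟨a, fun h => ha ?_⟩
    have := (h _ (idem_d a)).1
    rw [mim, zm, zm] at this
    rw [← mim a, ← ma, this, zm]
  intro a ha
  rcases H _ (additive_of_rel r hl hr hi hj hn) with h | h
  · have e1 : a * a⁻¹ = a⁻¹ * a := by
      have c1 := ha _ (idem_r a)
      have c2 := ha _ (idem_d a)
      rw [ma, mim] at c1
      rw [mim] at c2
      have d1 : a⁻¹ * a * (a * a⁻¹) = a⁻¹ * a := by rw [ma, c1]
      have d2 : a⁻¹ * a * (a * a⁻¹) = a * a⁻¹ := by rw [← ma, ← c2]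
      rw [← d2, d1]
    have : r a (a⁻¹ * a) := by
      intro e he
      rw [idem_inv (idem_d a)]
      have c := idem_comm he (idem_d a)
      have R : a⁻¹ * a * e * (a⁻¹ * a) = e * (a⁻¹ * a) := by
        rw [← c, ma, idem_d a]
      rw [R]
      constructor
      · rw [ha e he, ma, e1]
      · rw [ma, ← ha e he, ← ma, c]
    rw [(h _ _).1 this]
    exact idem_d a
  · obtain ⟨b, hb⟩ := hn
    exact absurd (h b 0) hb

theorem trans_aux {I : Set S} (hI : isAdditiveIdeal I) {a b c c' x y : S} (hc : nle c b)
    (h1 : isJoin c' y b) (hy : y ∈ I) (h2 : isJoin c x a) (hx : x ∈ I) :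
    ∃ w ∈ I, isJoin (c * (c'⁻¹ * c')) w a := by
  have K := IsBooleanInverseSemigroup.mul_join _ _ _ c (join_d h1)
  have e : c * (b⁻¹ * b) = c := by
    conv_lhs => rw [← hc.l]
    simp only [ma, mim]
    exact hc.l
  rw [e] at K
  obtain ⟨w, hw⟩ := exists_sub_join (nle_trans K.2.1 h2.1) h2.2.1
  exact ⟨w, hI.2.2 _ (hI.2.1 _ (hI.2.1 _ hy _).1 _).1 _ hx (join_compat hw) _ hw,
    join_three K h2 hw⟩

theorem zs_of_simple
    (H : ∀ σ : S → S → Prop, isAdditiveCongruence σ →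
        (∀ a b : S, σ a b ↔ a = b) ∨ (∀ a b : S, σ a b)) : isZeroSimplifying S := by
  refine ⟨IsBooleanInverseSemigroup.exists_ne_zero, ?_⟩
  intro I hI
  have h0 : (0 : S) ∈ I := by
    obtain ⟨a, ha⟩ := hI.1
    have := (hI.2.1 a ha 0).1
    rwa [zm] at this
  by_cases hu : I = Set.univ
  · exact Or.inr hu
  left
  let r : Setoid S :=
    { r := fun a b => ∃ c, ∃ x ∈ I, ∃ y ∈ I, isJoin c x a ∧ isJoin c y b
      iseqv := ⟨fun a => ⟨a, 0, h0, 0, h0, join_zero a, join_zero a⟩,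
        fun ⟨c, x, hx, y, hy, h1, h2⟩ => ⟨c, y, hy, x, hx, h2, h1⟩, by
        rintro a b d ⟨c, x, hx, y, hy, h1, h2⟩ ⟨c', y', hy', z, hz, h3, h4⟩
        obtain ⟨w, hw, k⟩ := trans_aux hI h2.1 h3 hy' h1 hx
        obtain ⟨w', hw', k'⟩ := trans_aux hI h3.1 h2 hy h4 hz
        have e : c' * (c⁻¹ * c) = c * (c'⁻¹ * c') := by
          calc c' * (c⁻¹ * c) = b * (c'⁻¹ * c') * (c⁻¹ * c) := by rw [h3.1.r]
            _ = b * (c⁻¹ * c) * (c'⁻¹ * c') := by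
              rw [ma, idem_comm (idem_d c') (idem_d c), ← ma]
            _ = _ := by rw [h2.1.r]
        rw [e] at k'
        exact ⟨_, w, hw, w', hw', k, k'⟩⟩ }
  have hl : ∀ a b c, r a b → r (c * a) (c * b) := by
    rintro a b s ⟨c, x, hx, y, hy, h1, h2⟩
    exact ⟨s * c, s * x, (hI.2.1 _ hx _).1, s * y, (hI.2.1 _ hy _).1,
      IsBooleanInverseSemigroup.mul_join _ _ _ _ h1, IsBooleanInverseSemigroup.mul_join _ _ _ _ h2⟩
  have hr : ∀ a b c, r a b → r (a * c) (b * c) := by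
    rintro a b s ⟨c, x, hx, y, hy, h1, h2⟩
    exact ⟨c * s, x * s, (hI.2.1 _ hx _).2, y * s, (hI.2.1 _ hy _).2,
      IsBooleanInverseSemigroup.join_mul _ _ _ _ h1, IsBooleanInverseSemigroup.join_mul _ _ _ _ h2⟩
  have Iinv : ∀ x ∈ I, x⁻¹ ∈ I := by
    intro x hx
    rw [← imi x]
    exact (hI.2.1 _ (hI.2.1 _ hx _).2 _).1
  have hi : ∀ a b, r a b → r a⁻¹ b⁻¹ := by
    rintro a b ⟨c, x, hx, y, hy, h1, h2⟩
    exact ⟨c⁻¹, x⁻¹, Iinv x hx, y⁻¹, Iinv y hy, inv_join h1, inv_join h2⟩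
  have hj : ∀ a b j a' b' j', isJoin a b j → isJoin a' b' j' → r a a' → r b b' → r j j' := by
    rintro a b j a' b' j' h h' ⟨c, x, hx, x', hx', h1, h2⟩ ⟨d, y, hy, y', hy', h3, h4⟩
    obtain ⟨k, hk⟩ := exists_sub_join (nle_trans h1.1 h.1) (nle_trans h3.1 h.2.1)
    obtain ⟨w, hw⟩ := exists_sub_join (nle_trans h1.2.1 h.1) (nle_trans h3.2.1 h.2.1)
    obtain ⟨w', hw'⟩ := exists_sub_join (nle_trans h2.2.1 h'.1) (nle_trans h4.2.1 h'.2.1)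
    exact ⟨k, w, hI.2.2 _ hx _ hy (join_compat hw) _ hw,
      w', hI.2.2 _ hx' _ hy' (join_compat hw') _ hw',
      join_four h1 h3 h hk hw, join_four h2 h4 h' hk hw'⟩
  have hn : ∃ a, ¬ r a 0 := by
    by_contra hcon
    push Not at hcon
    apply hu
    ext a
    simp only [Set.mem_univ, iff_true]
    obtain ⟨c, x, hx, y, hy, h1, h2⟩ := hcon a
    have := nle_zero h2.1
    subst this
    rw [join_unique h1 (zero_join x)]
    exact hx
  rcases H _ (additive_of_rel r hl hr hi hj hn) with h | h
  · ext a
    simp only [Set.mem_singleton_iff]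
    constructor
    · intro ha
      exact (h a 0).1 ⟨0, a, ha, 0, h0, zero_join a, zero_join 0⟩
    · rintro rfl; exact h0
  · obtain ⟨b, hb⟩ := hn
    exact absurd (h b 0) hb

theorem simple_of (hz : isZeroSimplifying S) (hf : isFundamental S)
    (σ : S → S → Prop) (hσ : isAdditiveCongruence σ) :
    (∀ a b : S, σ a b ↔ a = b) ∨ (∀ a b : S, σ a b) := by
  obtain ⟨T, mT, zT, iT, hT, θ, hs, ⟨hm, h0, hj⟩, hker⟩ := hσ
  have hid : isAdditiveIdeal {a : S | θ a = 0} := by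
    refine ⟨⟨0, h0⟩, ?_, ?_⟩
    · intro a ha s
      simp only [Set.mem_ofPred_eq] at ha ⊢
      rw [hm, hm, ha, mz, zm]; exact ⟨rfl, rfl⟩
    · intro a ha b hb hc j h
      simp only [Set.mem_ofPred_eq] at ha hb ⊢
      have K := hj a b j hc h
      rw [ha, hb] at K
      exact join_unique K (zero_join 0)
  have hi : ∀ a, θ a⁻¹ = (θ a)⁻¹ := fun a =>
    iu (by rw [← hm, ← hm, mim]) (by rw [← hm, ← hm, imi])
  rcases hz.2 _ hid with h | h
  · left
    have hzero : ∀ a, θ a = 0 → a = 0 := by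
      intro a ha
      have : a ∈ {a : S | θ a = 0} := ha
      rwa [h] at this
    have half : ∀ e f : S, idem e → idem f → θ e = θ f → e = e * f := by
      intro e f he hf' hef
      obtain ⟨g, G1, G2, G3, G4⟩ := IsBooleanInverseSemigroup.relcomp e (e * f) he
        (idem_mul he hf') (nle_mul_idem _ hf')
      have t : θ (e * f) = θ e := by rw [hm, ← hef, ← hm, he]
      have g0 : g = 0 := by
        apply hzero
        have := congrArg θ G3
        rw [hm, t, ← hm, h0, idem_comm G1 he, nle_idem G1 G2] at this
        exact this
      subst g0
      exact join_unique G4 (join_zero _)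
    have inj : ∀ e f : S, idem e → idem f → θ e = θ f → e = f := by
      intro e f he hf' hef
      rw [half e f he hf' hef, idem_comm he hf', ← half f e hf' he hef.symm]
    have conj : ∀ a e : S, idem e → idem (a * e * a⁻¹) := by
      intro a e he
      have := idem_conj a⁻¹ he
      rwa [ii, ← ma] at this
    intro a b
    rw [hker]
    refine ⟨fun hab => ?_, fun hab => by rw [hab]⟩
    have hc : ∀ e : S, idem e → a * e * a⁻¹ = b * e * b⁻¹ := by
      intro e he
      apply inj _ _ (conj _ _ he) (conj _ _ he)
      rw [hm, hm, hm, hm, hi, hi, hab]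
    have hr : a * a⁻¹ = b * b⁻¹ := by
      apply inj _ _ (idem_r a) (idem_r b)
      rw [hm, hm, hi, hi, hab]
    have hcom : idem (a⁻¹ * b) := by
      apply hf
      intro e he
      have e1 : b * e = a * e * a⁻¹ * b := by
        rw [hc e he]
        calc b * e = b * (b⁻¹ * b * e) := by simp only [ma, mimx]
          _ = _ := by rw [← idem_comm he (idem_d b)]; simp only [ma]
      rw [ma, e1]
      calc a⁻¹ * (a * e * a⁻¹ * b) = (a⁻¹ * a * e) * (a⁻¹ * b) := by simp only [ma]
        _ = _ := by rw [← idem_comm he (idem_d a)]; simp only [ma, imix]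
    have hl : a⁻¹ * b = a⁻¹ * a := by
      apply inj _ _ hcom (idem_d a)
      rw [hm, hm, hab]
    calc a = a * (a⁻¹ * b) := by rw [hl, mim]
      _ = b := by rw [← ma, hr, ma, mim]
  · right
    intro a b
    have ha : a ∈ {a : S | θ a = 0} := by rw [h]; trivial
    have hb : b ∈ {a : S | θ a = 0} := by rw [h]; trivial
    rw [hker]
    exact Eq.trans ha (Eq.symm hb)

end Cong

/-- A Boolean inverse semigroup is simple (its only additive congruences are
equality and the universal congruence) iff it is `0`-simplifying and fundamental. -/
theorem simple_iff_zeroSimplifying_and_fundamental (S : Type u)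
    [Mul S] [Zero S] [Inv S] [IsBooleanInverseSemigroup S] :
    (∀ σ : S → S → Prop, isAdditiveCongruence σ →
        (∀ a b : S, σ a b ↔ a = b) ∨ (∀ a b : S, σ a b)) ↔
      (isZeroSimplifying S ∧ isFundamental S) := by
  exact ⟨fun H => ⟨zs_of_simple H, fund_of_simple H⟩, fun H => simple_of H.1 H.2⟩


end Paper
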